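/- Let λ ∈ ℂ with Im λ > ρ. Then the integral ∫₀^∞ Φ_λ(t) Δ(t) dt converges absolutely and equals 2iλ c(−λ)/(ρ² + λ²), i.e. it equals −(2^{iλ+ρ+1}/(ρ²+λ²)) · Γ(1−iλ)Γ((m₁+m₂+1)/2)/(Γ((m₁+2)/4 − iλ/2) Γ((ρ−iλ)/2)), where c is the Harish-Chandra c-function c(λ) = 2^{ρ−iλ} Γ((m₁+m₂+1)/2)Γ(iλ)/(Γ((ρ+iλ)/2)Γ((m₁+2)/4 + iλ/2)). -/

import Mathlib

open Complex MeasureTheory Set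

noncomputable section

/-- Gauss hypergeometric function ₂F₁ as a power series sum. -/
def hyp (a b c x : ℂ) : ℂ :=
  ∑' n : ℕ, (ascPochhammer ℂ n).eval a * (ascPochhammer ℂ n).eval b /
    ((ascPochhammer ℂ n).eval c * (n.factorial : ℂ)) * x ^ n

/-- ρ = (m₁ + 2 m₂)/2 -/
def rho (m₁ m₂ : ℕ) : ℝ := ((m₁ : ℝ) + 2 * m₂) / 2

/-- Δ(t) = (2 sinh t)^(m₁+m₂) (2 cosh t)^(m₂) -/
def Del (m₁ m₂ : ℕ) (t : ℝ) : ℝ :=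
  (2 * Real.sinh t) ^ (m₁ + m₂) * (2 * Real.cosh t) ^ m₂

/-- The solution Φ_λ. -/
def Phi (m₁ m₂ : ℕ) (l : ℂ) (t : ℝ) : ℂ :=
  ((2 * Real.cosh t : ℝ) : ℂ) ^ (Complex.I * l - (rho m₁ m₂ : ℂ)) *
    hyp (((rho m₁ m₂ : ℂ) - Complex.I * l) / 2) (((m₁ : ℂ) + 2) / 4 - Complex.I * l / 2)
      (1 - Complex.I * l) ((((Real.cosh t) ^ 2 : ℝ) : ℂ))⁻¹

/-- The function b_λ. -/
def bfun (m₁ m₂ : ℕ) (l : ℂ) (t : ℝ) : ℂ :=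
  (2 : ℂ) ^ (-(rho m₁ m₂ : ℂ) - 1 - Complex.I * l) *
    (Complex.Gamma (((rho m₁ m₂ : ℂ) - Complex.I * l) / 2) *
      Complex.Gamma (((m₁ : ℂ) + 2) / 4 - Complex.I * l / 2) /
      (Complex.Gamma (((m₁ : ℂ) + (m₂ : ℂ) + 1) / 2) * Complex.Gamma (1 - Complex.I * l))) *
    Phi m₁ m₂ l t

/-- The Harish-Chandra c-function. -/
def cfun (m₁ m₂ : ℕ) (l : ℂ) : ℂ :=
  (2 : ℂ) ^ ((rho m₁ m₂ : ℂ) - Complex.I * l) *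
    Complex.Gamma (((m₁ : ℂ) + (m₂ : ℂ) + 1) / 2) * Complex.Gamma (Complex.I * l) /
    (Complex.Gamma (((rho m₁ m₂ : ℂ) + Complex.I * l) / 2) *
      Complex.Gamma (((m₁ : ℂ) + 2) / 4 + Complex.I * l / 2))

/-!
Substituting `x = (cosh t)⁻²` turns `Φ_λ(t) Δ(t) dt` into a constant multiple of
`x ^ (u - 1) (1 - x) ^ (v - 1) ₂F₁(a, u + v; c; x) dx` on `(0, 1)`, with `a = (ρ - iλ) / 2`,
`u = (-ρ - iλ) / 2`, `v = (m₁ + m₂ + 1) / 2` and `c = a + u + 1`. The second parameter of `₂F₁` is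
the sum of the exponents of the weight, so integrating the power series termwise cancels its
Pochhammer symbol, and the integral is `B(u, v) ₂F₁(a, u; c; 1)`; the convergence of this series is
read off the growth `(z)ₙ / (w)ₙ = O(n ^ Re (z - w))`. Gauss's evaluation of `₂F₁(a, b; c; 1)` comes
from the same transform with weight exponents `b` and `c - b`: there `₂F₁(a, c; c; x)` is the
binomial series of `(1 - x) ^ (-a)`, which makes the integral an ordinary beta integral.
-/

open Asymptotics Filter Topology

theorem ascPochhammer_eval_eq_prod_range {R : Type*} [CommSemiring R] (n : ℕ) (z : R) :
    (ascPochhammer R n).eval z = ∏ j ∈ Finset.range n, (z + j) := by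
  induction n with
  | zero => simp
  | succ n ih => rw [ascPochhammer_succ_eval, Finset.prod_range_succ, ih]

theorem ascPochhammer_succ_eval_eq_div_GammaSeq (z : ℂ) {n : ℕ} (hn : n ≠ 0) :
    (ascPochhammer ℂ (n + 1)).eval z = (n : ℂ) ^ z * n.factorial / GammaSeq z n := by
  have hz : (n : ℂ) ^ z * n.factorial ≠ 0 := by simp [cpow_eq_zero_iff, hn, n.factorial_ne_zero]
  rw [GammaSeq, div_div_cancel₀ hz, ascPochhammer_eval_eq_prod_range]

theorem eventually_add_natCast_ne_zero {R : Type*} [AddGroupWithOne R] [CharZero R] (z : R) :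
    ∀ᶠ n : ℕ in atTop, z + n ≠ 0 := by
  have hinj : Function.Injective fun n : ℕ ↦ z + n :=
    (add_right_injective z).comp Nat.cast_injective
  rw [← Nat.cofinite_eq_atTop]
  exact hinj.tendsto_cofinite.eventually (finite_singleton 0).compl_mem_cofinite

theorem ascPochhammer_eval_div_eventuallyEq (u w : ℂ) :
    (fun n ↦ (ascPochhammer ℂ n).eval u / (ascPochhammer ℂ n).eval w) =ᶠ[atTop]
      fun n ↦ (n : ℂ) ^ (u - w) * (GammaSeq w n / GammaSeq u n * ((w + n) / (u + n))) := by
  filter_upwards [eventually_ne_atTop 0, eventually_add_natCast_ne_zero u,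
    eventually_add_natCast_ne_zero w] with n hn hu hw
  have hf : (n.factorial : ℂ) ≠ 0 := Nat.cast_ne_zero.mpr n.factorial_ne_zero
  have succ_eval {z : ℂ} (hz : z + n ≠ 0) :
      (ascPochhammer ℂ n).eval z = (n : ℂ) ^ z * n.factorial / GammaSeq z n / (z + n) := by
    rw [← ascPochhammer_succ_eval_eq_div_GammaSeq z hn, ascPochhammer_succ_eval,
      mul_div_cancel_right₀ _ hz]
  rw [succ_eval hu, succ_eval hw, cpow_sub _ _ (Nat.cast_ne_zero.mpr hn)]
  field_simp

theorem isBigO_natCast_cpow (z : ℂ) :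
    (fun n : ℕ ↦ (n : ℂ) ^ z) =O[atTop] fun n : ℕ ↦ (n : ℝ) ^ z.re := by
  refine .of_norm_eventuallyLE ?_
  filter_upwards [eventually_gt_atTop 0] with n hn
  rw [norm_natCast_cpow_of_pos hn]

theorem isBigO_ascPochhammer_eval_div (u w : ℂ) :
    (fun n ↦ (ascPochhammer ℂ n).eval u / (ascPochhammer ℂ n).eval w) =O[atTop]
      fun n : ℕ ↦ (n : ℝ) ^ (u - w).re := by
  by_cases hu : ∃ k : ℕ, u = -k
  · obtain ⟨k, rfl⟩ := hu
    refine EventuallyEq.trans_isBigO (f₂ := 0) ?_ (isBigO_zero _ _)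
    filter_upwards [eventually_gt_atTop k] with n hn
    simp [ascPochhammer_eval_eq_zero_iff, hn]
  · push Not at hu
    have hratio : Tendsto (fun n : ℕ ↦ GammaSeq w n / GammaSeq u n * ((w + n) / (u + n))) atTop
        (𝓝 (Gamma w / Gamma u * 1)) := by
      refine ((GammaSeq_tendsto_Gamma w).div (GammaSeq_tendsto_Gamma u) (Gamma_ne_zero hu)).mul ?_
      simpa using tendsto_add_mul_div_add_mul_atTop_nhds w u (1 : ℂ) one_ne_zero
    simpa using (ascPochhammer_eval_div_eventuallyEq u w).trans_isBigO
      ((isBigO_natCast_cpow _).mul (hratio.isBigO_one ℝ))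

theorem isBigO_ordinaryHypergeometricCoefficient (a b c : ℂ) :
    ordinaryHypergeometricCoefficient a b c =O[atTop]
      fun n : ℕ ↦ (n : ℝ) ^ ((a + b - c).re - 1) := by
  refine ((isBigO_ascPochhammer_eval_div a 1).mul (isBigO_ascPochhammer_eval_div b c)).congr' ?_ ?_
  · refine .of_forall fun n ↦ ?_
    simp only [ascPochhammer_eval_one]
    ring
  · filter_upwards [eventually_gt_atTop 0] with n hn
    rw [← Real.rpow_add (Nat.cast_pos.mpr hn)]
    congr 1
    simp only [sub_re, add_re, one_re]
    ring

theorem integrable_tsum_of_summable_integral_norm {α ι E : Type*} [MeasurableSpace α]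
    [Countable ι] [NormedAddCommGroup E] [CompleteSpace E] {μ : Measure α} {F : ι → α → E}
    (hF : ∀ i, Integrable (F i) μ) (hs : Summable fun i ↦ ∫ x, ‖F i x‖ ∂μ) :
    Integrable (fun x ↦ ∑' i, F i x) μ := by
  have hlt : ∫⁻ x, ∑' i, ‖F i x‖ₑ ∂μ < ⊤ := by
    rw [lintegral_tsum fun i ↦ (hF i).1.enorm]
    simp only [← ofReal_integral_norm_eq_lintegral_enorm (hF _)]
    exact hs.tsum_ofReal_lt_top
  have hsummable : ∀ᵐ x ∂μ, Summable fun i ↦ F i x := by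
    filter_upwards [ae_lt_top' (AEMeasurable.tsum fun i ↦ (hF i).1.enorm) hlt.ne] with x hx
    exact .of_norm (by simpa using ENNReal.summable_toReal hx.ne)
  refine ⟨aestronglyMeasurable_of_tendsto_ae atTop
    (fun s : Finset ι ↦ s.aestronglyMeasurable_fun_sum fun i _ ↦ (hF i).1)
    (hsummable.mono fun x hx ↦ hx.hasSum), ?_⟩
  exact (lintegral_mono fun x ↦ enorm_tsum_le_tsum_enorm).trans_lt hlt

theorem ne_neg_natCast_of_re_pos {z : ℂ} (hz : 0 < z.re) (k : ℕ) : z ≠ -k := by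
  rintro rfl
  exact hz.not_ge (by simp)

theorem re_add_natCast_pos {z : ℂ} (hz : 0 < z.re) (n : ℕ) : 0 < (z + n).re := by
  simpa using add_pos_of_pos_of_nonneg hz n.cast_nonneg

theorem ascPochhammer_eval_ne_zero_of_re_pos {z : ℂ} (hz : 0 < z.re) (n : ℕ) :
    (ascPochhammer ℂ n).eval z ≠ 0 := by
  rw [Ne, ascPochhammer_eval_eq_zero_iff]
  rintro ⟨k, -, h⟩
  exact ne_neg_natCast_of_re_pos hz k (neg_eq_iff_eq_neg.mp h.symm)

theorem Gamma_add_natCast_of_re_pos {z : ℂ} (hz : 0 < z.re) (n : ℕ) :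
    Gamma (z + n) = (ascPochhammer ℂ n).eval z * Gamma z := by
  rw [← Gamma_add_nat_div_Gamma_eq z (ne_neg_natCast_of_re_pos hz),
    div_mul_cancel₀ _ (Gamma_ne_zero_of_re_pos hz)]

section Beta

variable {u v : ℂ}

theorem betaIntegral_add_natCast_left (hu : 0 < u.re) (hv : 0 < v.re) (n : ℕ) :
    betaIntegral (u + n) v =
      (ascPochhammer ℂ n).eval u / (ascPochhammer ℂ n).eval (u + v) * betaIntegral u v := by
  have huv : 0 < (u + v).re := add_pos hu hv
  rw [betaIntegral_eq_Gamma_mul_div _ _ (re_add_natCast_pos hu n) hv,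
    betaIntegral_eq_Gamma_mul_div _ _ hu hv, add_right_comm,
    Gamma_add_natCast_of_re_pos hu, Gamma_add_natCast_of_re_pos huv]
  ring

theorem betaIntegral_eq_setIntegral_Ioo (u v : ℂ) :
    betaIntegral u v = ∫ x in Ioo (0 : ℝ) 1, (x : ℂ) ^ (u - 1) * (1 - (x : ℂ)) ^ (v - 1) := by
  rw [betaIntegral, intervalIntegral.integral_of_le zero_le_one, integral_Ioc_eq_integral_Ioo]

theorem integrableOn_betaIntegrand (hu : 0 < u.re) (hv : 0 < v.re) :
    IntegrableOn (fun x : ℝ ↦ (x : ℂ) ^ (u - 1) * (1 - (x : ℂ)) ^ (v - 1)) (Ioo 0 1) :=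
  (intervalIntegrable_iff_integrableOn_Ioo_of_le zero_le_one).mp (betaIntegral_convergent hu hv)

theorem integral_norm_betaIntegrand (u v : ℂ) :
    ∫ x in Ioo (0 : ℝ) 1, ‖(x : ℂ) ^ (u - 1) * (1 - (x : ℂ)) ^ (v - 1)‖ =
      ‖betaIntegral u.re v.re‖ := by
  have hnorm : EqOn (fun x : ℝ ↦ (x : ℂ) ^ ((u.re : ℂ) - 1) * (1 - (x : ℂ)) ^ ((v.re : ℂ) - 1))
      (fun x ↦ ((‖(x : ℂ) ^ (u - 1) * (1 - (x : ℂ)) ^ (v - 1)‖ : ℝ) : ℂ)) (Ioo 0 1) := by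
    intro x hx
    have hx' : 0 < 1 - x := sub_pos.mpr hx.2
    have norm_cpow {y : ℝ} (hy : 0 < y) (z : ℂ) :
        ((‖(y : ℂ) ^ (z - 1)‖ : ℝ) : ℂ) = (y : ℂ) ^ ((z.re : ℂ) - 1) := by
      rw [norm_cpow_eq_rpow_re_of_pos hy, ofReal_cpow hy.le]
      simp
    have hsub : 1 - (x : ℂ) = ((1 - x : ℝ) : ℂ) := by simp
    simp only [norm_mul, ofReal_mul]
    rw [hsub, norm_cpow hx.1, norm_cpow hx']
  rw [betaIntegral_eq_setIntegral_Ioo, setIntegral_congr_fun measurableSet_Ioo hnorm,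
    integral_complex_ofReal, norm_real,
    Real.norm_of_nonneg (integral_nonneg fun _ ↦ norm_nonneg _)]

end Beta

/-- The integrand `x ^ (u - 1) (1 - x) ^ (v - 1) ₂F₁(a, u + v; c; x)` of the beta transform of
`₂F₁`. The second parameter is tied to the weight so that the transform is again a value of `₂F₁`
instead of `₃F₂`. -/
def betaKernel (a u v c : ℂ) (x : ℝ) : ℂ :=
  (x : ℂ) ^ (u - 1) * (1 - (x : ℂ)) ^ (v - 1) * ₂F₁ a (u + v) c (x : ℂ)

section BetaKernel

variable {a u v c : ℂ}

theorem betaKernel_eq_tsum {x : ℝ} (hx : 0 < x) :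
    betaKernel a u v c x = ∑' n, ordinaryHypergeometricCoefficient a (u + v) c n *
      ((x : ℂ) ^ (u + n - 1) * (1 - (x : ℂ)) ^ (v - 1)) := by
  rw [betaKernel, ordinaryHypergeometric_eq_tsum, ← tsum_mul_left]
  refine tsum_congr fun n ↦ ?_
  rw [add_sub_right_comm, cpow_add _ _ (ofReal_ne_zero.mpr hx.ne'), cpow_natCast, smul_eq_mul]
  ring

theorem isBigO_ordinaryHypergeometricCoefficient_mul_ascPochhammer_div (a u v c : ℂ) :
    (fun n ↦ ordinaryHypergeometricCoefficient a (u + v) c n *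
      ((ascPochhammer ℂ n).eval (u.re : ℂ) / (ascPochhammer ℂ n).eval ((u.re : ℂ) + v.re)))
      =O[atTop] fun n : ℕ ↦ (n : ℝ) ^ (-(c - a - u).re - 1) := by
  refine ((isBigO_ordinaryHypergeometricCoefficient a (u + v) c).mul
    (isBigO_ascPochhammer_eval_div (u.re : ℂ) ((u.re : ℂ) + v.re))).congr' .rfl ?_
  filter_upwards [eventually_gt_atTop 0] with n hn
  rw [← Real.rpow_add (Nat.cast_pos.mpr hn)]
  congr 1
  simp only [sub_re, add_re, ofReal_re]
  ring

theorem summable_integral_norm_betaKernel_term (hu : 0 < u.re) (hv : 0 < v.re)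
    (hc : 0 < (c - a - u).re) :
    Summable fun n : ℕ ↦ ∫ x in Ioo (0 : ℝ) 1, ‖ordinaryHypergeometricCoefficient a (u + v) c n *
      ((x : ℂ) ^ (u + n - 1) * (1 - (x : ℂ)) ^ (v - 1))‖ := by
  have hterm (n : ℕ) : ∫ x in Ioo (0 : ℝ) 1, ‖ordinaryHypergeometricCoefficient a (u + v) c n *
      ((x : ℂ) ^ (u + n - 1) * (1 - (x : ℂ)) ^ (v - 1))‖ =
      ‖ordinaryHypergeometricCoefficient a (u + v) c n * ((ascPochhammer ℂ n).eval (u.re : ℂ) /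
        (ascPochhammer ℂ n).eval ((u.re : ℂ) + v.re))‖ * ‖betaIntegral u.re v.re‖ := by
    rw [norm_mul, mul_assoc, ← norm_mul _ (betaIntegral _ _),
      ← betaIntegral_add_natCast_left (by simpa) (by simpa)]
    simp only [norm_mul (ordinaryHypergeometricCoefficient _ _ _ _)]
    rw [integral_const_mul, integral_norm_betaIntegrand]
    simp
  simp only [hterm]
  have hsummable : Summable fun n : ℕ ↦ (n : ℝ) ^ (-(c - a - u).re - 1) :=
    Real.summable_nat_rpow.mpr (by linarith)
  exact (summable_of_isBigO_nat hsummable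
    (isBigO_ordinaryHypergeometricCoefficient_mul_ascPochhammer_div a u v c)).norm.mul_right _

theorem integrableOn_betaKernel (hu : 0 < u.re) (hv : 0 < v.re) (hc : 0 < (c - a - u).re) :
    IntegrableOn (betaKernel a u v c) (Ioo 0 1) := by
  have hint (n : ℕ) := (integrableOn_betaIntegrand (re_add_natCast_pos hu n) hv).const_mul
    (ordinaryHypergeometricCoefficient a (u + v) c n)
  rw [integrableOn_congr_fun (fun x hx ↦ betaKernel_eq_tsum hx.1) measurableSet_Ioo]
  exact integrable_tsum_of_summable_integral_norm hint
    (summable_integral_norm_betaKernel_term hu hv hc)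

theorem integral_betaKernel (hu : 0 < u.re) (hv : 0 < v.re) (hc : 0 < (c - a - u).re) :
    ∫ x in Ioo 0 1, betaKernel a u v c x = betaIntegral u v * ₂F₁ a u c (1 : ℂ) := by
  have huv : ∀ n, (ascPochhammer ℂ n).eval (u + v) ≠ 0 :=
    ascPochhammer_eval_ne_zero_of_re_pos (add_pos hu hv)
  rw [setIntegral_congr_fun measurableSet_Ioo fun x hx ↦ betaKernel_eq_tsum hx.1,
    ← integral_tsum_of_summable_integral_norm
      (fun n ↦ (integrableOn_betaIntegrand (re_add_natCast_pos hu n) hv).const_mul _)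
      (summable_integral_norm_betaKernel_term hu hv hc),
    ordinaryHypergeometric_eq_tsum, ← tsum_mul_left]
  refine tsum_congr fun n ↦ ?_
  rw [integral_const_mul, ← betaIntegral_eq_setIntegral_Ioo, betaIntegral_add_natCast_left hu hv]
  simp only [one_pow, smul_eq_mul, mul_one]
  field_simp [huv n]

end BetaKernel

theorem ordinaryHypergeometric_self_right {a c x : ℂ} (hx : ‖x‖ < 1) (hc : ∀ k : ℕ, c ≠ -k) :
    ₂F₁ a c c x = (1 - x) ^ (-a) := by
  have hx' : -x ∈ Metric.eball (0 : ℂ) 1 := by simpa [← ofReal_norm] using hx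
  have hc' (k : ℕ) : (k : ℂ) ≠ -c := fun h ↦ hc k (by simp [h])
  have h := (one_add_cpow_hasFPowerSeriesOnBall_zero (a := -a)).sum hx'
  rw [zero_add, ← sub_eq_add_neg, binomialSeries_eq_ordinaryHypergeometricSeries hc'] at h
  rw [h, neg_neg]
  refine tsum_congr fun n ↦ ?_
  rw [FormalMultilinearSeries.compContinuousLinearMap_apply]
  congr 1
  ext
  simp

theorem ordinaryHypergeometric_one {a b c : ℂ} (hb : 0 < b.re) (hcb : 0 < (c - b).re)
    (hcab : 0 < (c - a - b).re) :
    ₂F₁ a b c (1 : ℂ) = Gamma c * Gamma (c - a - b) / (Gamma (c - a) * Gamma (c - b)) := by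
  have hc : 0 < c.re := by simpa using add_pos hcb hb
  have hkernel : EqOn (betaKernel a b (c - b) c)
      (fun x : ℝ ↦ (x : ℂ) ^ (b - 1) * (1 - (x : ℂ)) ^ (c - a - b - 1)) (Ioo 0 1) := by
    intro x hx
    have hx' : 1 - (x : ℂ) ≠ 0 := sub_ne_zero.mpr (by exact_mod_cast hx.2.ne')
    simp only [betaKernel]
    rw [add_sub_cancel, ordinaryHypergeometric_self_right, mul_assoc, ← cpow_add _ _ hx']
    · ring_nf
    · rw [norm_real, Real.norm_of_nonneg hx.1.le]; exact hx.2
    · exact ne_neg_natCast_of_re_pos hc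
  have h := integral_betaKernel hb hcb hcab
  rw [setIntegral_congr_fun measurableSet_Ioo hkernel, ← betaIntegral_eq_setIntegral_Ioo,
    betaIntegral_eq_Gamma_mul_div _ _ hb hcab, betaIntegral_eq_Gamma_mul_div _ _ hb hcb,
    add_sub_cancel, add_sub_cancel] at h
  have hΓb := Gamma_ne_zero_of_re_pos hb
  have hΓcb := Gamma_ne_zero_of_re_pos hcb
  have hΓc := Gamma_ne_zero_of_re_pos hc
  field_simp at h ⊢
  linear_combination -h

theorem integral_betaKernel_add_one {a u v : ℂ} (ha : 0 < (a + 1).re) (hu : 0 < u.re)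
    (hv : 0 < v.re) :
    ∫ x in Ioo 0 1, betaKernel a u v (a + u + 1) x =
      Gamma v * Gamma (a + u + 1) / (u * Gamma (a + 1) * Gamma (u + v)) := by
  have hcau : a + u + 1 - a - u = 1 := by ring
  have hcu : a + u + 1 - u = a + 1 := by ring
  have hca : a + u + 1 - a = u + 1 := by ring
  have hu0 : u ≠ 0 := ne_zero_of_re_pos hu
  have hΓu := Gamma_ne_zero_of_re_pos hu
  rw [integral_betaKernel hu hv (by simp [hcau]), ordinaryHypergeometric_one hu (by rwa [hcu])
    (by simp [hcau]), hcau, hcu, hca, betaIntegral_eq_Gamma_mul_div _ _ hu hv, Gamma_one,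
    Gamma_add_one _ hu0]
  field_simp

theorem hasDerivAt_inv_cosh_sq (t : ℝ) :
    HasDerivAt (fun t ↦ (Real.cosh t ^ 2)⁻¹) (-(2 * Real.sinh t / Real.cosh t ^ 3)) t := by
  have h : Real.cosh t ≠ 0 := (Real.cosh_pos t).ne'
  convert! ((Real.hasDerivAt_cosh t).pow 2).inv (pow_ne_zero 2 h) using 1
  simp only [Nat.cast_ofNat, Nat.add_one_sub_one, pow_one, Pi.pow_apply]
  field_simp

theorem antitoneOn_inv_cosh_sq : AntitoneOn (fun t ↦ (Real.cosh t ^ 2)⁻¹) (Ioi 0) := by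
  intro x hx y hy hxy
  have hcosh : Real.cosh x ≤ Real.cosh y := by
    rwa [Real.cosh_le_cosh, abs_of_pos hx, abs_of_pos hy]
  have := Real.cosh_pos x
  dsimp only
  gcongr

theorem image_inv_cosh_sq_Ioi :
    (fun t ↦ (Real.cosh t ^ 2)⁻¹) '' Ioi 0 = Ioo 0 1 := by
  ext x
  constructor
  · rintro ⟨t, ht, rfl⟩
    have hcosh : 1 < Real.cosh t := Real.one_lt_cosh.mpr (ne_of_gt ht)
    exact ⟨by positivity, inv_lt_one_of_one_lt₀ (one_lt_pow₀ hcosh two_ne_zero)⟩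
  · rintro ⟨h0, h1⟩
    have hs : 1 < (√x)⁻¹ :=
      (one_lt_inv₀ (Real.sqrt_pos.mpr h0)).mpr ((Real.sqrt_lt' one_pos).mpr (by simpa using h1))
    refine ⟨Real.arcosh (√x)⁻¹, Real.arcosh_pos hs, ?_⟩
    simp only [Real.cosh_arcosh hs.le, inv_pow, Real.sq_sqrt h0.le, inv_inv]

section InvCoshSqSubstitution

variable {E : Type*} [NormedAddCommGroup E] [NormedSpace ℝ E]

theorem integrableOn_Ioo_iff_integrableOn_comp_inv_cosh_sq (f : ℝ → E) :
    IntegrableOn f (Ioo 0 1) ↔ IntegrableOn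
      (fun t ↦ (2 * Real.sinh t / Real.cosh t ^ 3) • f (Real.cosh t ^ 2)⁻¹) (Ioi 0) := by
  rw [← image_inv_cosh_sq_Ioi, integrableOn_image_iff_integrableOn_deriv_smul_of_antitoneOn
    measurableSet_Ioi (fun t _ ↦ (hasDerivAt_inv_cosh_sq t).hasDerivWithinAt)
    antitoneOn_inv_cosh_sq]
  simp only [neg_neg]

theorem integral_Ioo_eq_integral_comp_inv_cosh_sq (f : ℝ → E) :
    ∫ x in Ioo 0 1, f x =
      ∫ t in Ioi 0, (2 * Real.sinh t / Real.cosh t ^ 3) • f (Real.cosh t ^ 2)⁻¹ := by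
  rw [← image_inv_cosh_sq_Ioi, integral_image_eq_integral_deriv_smul_of_antitoneOn
    measurableSet_Ioi (fun t _ ↦ (hasDerivAt_inv_cosh_sq t).hasDerivWithinAt)
    antitoneOn_inv_cosh_sq]
  simp only [neg_neg]

end InvCoshSqSubstitution

theorem deriv_inv_cosh_sq_smul_betaIntegrand (u v : ℂ) {t : ℝ} (ht : 0 < t) :
    (2 * Real.sinh t / Real.cosh t ^ 3) • ((((Real.cosh t ^ 2)⁻¹ : ℝ) : ℂ) ^ (u - 1) *
      (1 - (((Real.cosh t ^ 2)⁻¹ : ℝ) : ℂ)) ^ (v - 1)) =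
      2 * ((Real.sinh t : ℂ) ^ (2 * v - 1) * (Real.cosh t : ℂ) ^ (1 - 2 * u - 2 * v)) := by
  have hsinh : 0 < Real.sinh t := Real.sinh_pos_iff.mpr ht
  have hcosh : 0 < Real.cosh t := Real.cosh_pos t
  have hsub : 1 - (((Real.cosh t ^ 2)⁻¹ : ℝ) : ℂ) =
      ((Real.sinh t ^ 2 * (Real.cosh t ^ 2)⁻¹ : ℝ) : ℂ) := by
    rw [← ofReal_one, ← ofReal_sub, Real.sinh_sq]
    field_simp
  have cpow_eq {r : ℝ} (hr : 0 < r) (z : ℂ) : (r : ℂ) ^ z = exp (Real.log r * z) := by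
    rw [cpow_def_of_ne_zero (ofReal_ne_zero.mpr hr.ne'), ofReal_log hr.le]
  have eq_exp {r : ℝ} (hr : 0 < r) : (r : ℂ) = exp (Real.log r) := by
    rw [← ofReal_exp, Real.exp_log hr]
  rw [hsub, cpow_eq (by positivity), cpow_eq (by positivity), cpow_eq hsinh, cpow_eq hcosh,
    Real.log_mul (by positivity) (by positivity), Real.log_inv, Real.log_pow, Real.log_pow,
    real_smul, ofReal_div, ofReal_mul, ofReal_pow, eq_exp hsinh, eq_exp hcosh, ← exp_nat_mul,
    mul_div_assoc, ← exp_sub, mul_assoc, ← exp_add, ← exp_add, ← exp_add]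
  push_cast
  ring_nf

theorem hyp_eq_ordinaryHypergeometric (a b c x : ℂ) : hyp a b c x = ₂F₁ a b c x := by
  rw [hyp, ordinaryHypergeometric_eq_tsum]
  refine tsum_congr fun n ↦ ?_
  rw [smul_eq_mul]
  ring

theorem ofReal_rho (m₁ m₂ : ℕ) : (rho m₁ m₂ : ℂ) = ((m₁ : ℂ) + 2 * m₂) / 2 := by
  simp [rho]

theorem eqOn_Phi_mul_Del (m₁ m₂ : ℕ) (l : ℂ) :
    EqOn (fun t ↦ Phi m₁ m₂ l t * (Del m₁ m₂ t : ℂ))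
      (fun t ↦ 2 ^ (I * l + rho m₁ m₂ - 1) * ((2 * Real.sinh t / Real.cosh t ^ 3) •
        betaKernel ((rho m₁ m₂ - I * l) / 2) ((-rho m₁ m₂ - I * l) / 2) ((m₁ + m₂ + 1) / 2)
          (1 - I * l) (Real.cosh t ^ 2)⁻¹)) (Ioi 0) := by
  intro t ht
  have hcosh : (Real.cosh t : ℂ) ≠ 0 := ofReal_ne_zero.mpr (Real.cosh_pos t).ne'
  have hparam : (-rho m₁ m₂ - I * l) / 2 + ((m₁ : ℂ) + m₂ + 1) / 2 =
      (m₁ + 2) / 4 - I * l / 2 := by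
    rw [ofReal_rho]; ring
  have hsinh_pow : (Real.sinh t : ℂ) ^ (2 * (((m₁ : ℂ) + m₂ + 1) / 2) - 1) =
      (Real.sinh t : ℂ) ^ (m₁ + m₂) := by
    rw [← cpow_natCast]; push_cast; ring_nf
  have hcosh_pow : (Real.cosh t : ℂ) ^ (1 - 2 * ((-rho m₁ m₂ - I * l) / 2) -
      2 * (((m₁ : ℂ) + m₂ + 1) / 2)) =
        (Real.cosh t : ℂ) ^ (I * l - rho m₁ m₂) * (Real.cosh t : ℂ) ^ m₂ := by
    rw [← cpow_natCast, ← cpow_add _ _ hcosh, ofReal_rho]; ring_nf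
  have htwo_pow : (2 : ℂ) ^ (I * l + rho m₁ m₂ - 1) * 2 =
      2 ^ (I * l - rho m₁ m₂) * 2 ^ (m₁ + m₂) * 2 ^ m₂ := by
    rw [← cpow_natCast, ← cpow_natCast, ← cpow_add _ _ two_ne_zero, ← cpow_add _ _ two_ne_zero,
      cpow_sub _ _ two_ne_zero, cpow_one, div_mul_cancel₀ _ two_ne_zero, ofReal_rho]
    push_cast; ring_nf
  dsimp only
  rw [betaKernel, ← smul_mul_assoc, deriv_inv_cosh_sq_smul_betaIntegrand _ _ ht, hparam,
    hsinh_pow, hcosh_pow, Phi, Del, hyp_eq_ordinaryHypergeometric, ofReal_inv, ofReal_mul 2,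
    mul_cpow_ofReal_nonneg zero_le_two (Real.cosh_pos t).le, ofReal_mul (_ ^ _), ofReal_pow (_ * _),
    ofReal_pow (_ * _), ofReal_mul 2, ofReal_mul 2, ofReal_ofNat, mul_pow, mul_pow, mul_assoc 2,
    ← mul_assoc _ 2, htwo_pow]
  ring

theorem rho_nonneg (m₁ m₂ : ℕ) : 0 ≤ rho m₁ m₂ := by
  rw [rho]
  positivity

section Parameters

variable {m₁ m₂ : ℕ} {l : ℂ}

theorem re_rho_sub_I_mul_div_two_pos (hl : rho m₁ m₂ < l.im) :
    0 < ((rho m₁ m₂ - I * l) / 2).re := by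
  have := rho_nonneg m₁ m₂
  simp only [div_ofNat_re, sub_re, ofReal_re, mul_re, I_re, zero_mul, I_im, one_mul, zero_sub]
  linarith

theorem re_neg_rho_sub_I_mul_div_two_pos (hl : rho m₁ m₂ < l.im) :
    0 < ((-rho m₁ m₂ - I * l) / 2).re := by
  simp only [div_ofNat_re, sub_re, neg_re, ofReal_re, mul_re, I_re, zero_mul, I_im, one_mul,
    zero_sub]
  linarith

theorem re_natCast_add_natCast_add_one_div_two_pos (m n : ℕ) :
    0 < (((m : ℂ) + n + 1) / 2).re := by
  simp only [div_ofNat_re, add_re, natCast_re, one_re]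
  positivity

theorem ne_zero_of_rho_lt_im (hl : rho m₁ m₂ < l.im) : l ≠ 0 := by
  rintro rfl
  exact (rho_nonneg m₁ m₂).not_gt hl

theorem integrableOn_Phi_mul_Del (hl : rho m₁ m₂ < l.im) :
    IntegrableOn (fun t ↦ Phi m₁ m₂ l t * (Del m₁ m₂ t : ℂ)) (Ioi 0) := by
  rw [integrableOn_congr_fun (eqOn_Phi_mul_Del m₁ m₂ l) measurableSet_Ioi]
  refine ((integrableOn_Ioo_iff_integrableOn_comp_inv_cosh_sq _).mp
    (integrableOn_betaKernel (re_neg_rho_sub_I_mul_div_two_pos hl)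
      (re_natCast_add_natCast_add_one_div_two_pos m₁ m₂) ?_)).const_mul _
  have hcau : 1 - I * l - (rho m₁ m₂ - I * l) / 2 - (-rho m₁ m₂ - I * l) / 2 = 1 := by ring
  rw [hcau]
  exact one_pos

theorem integral_Phi_mul_Del (hl : rho m₁ m₂ < l.im) :
    ∫ t in Ioi 0, Phi m₁ m₂ l t * (Del m₁ m₂ t : ℂ) =
      -(2 ^ (I * l + rho m₁ m₂ + 1) / ((rho m₁ m₂ : ℂ) ^ 2 + l ^ 2)) *
        (Gamma (1 - I * l) * Gamma ((m₁ + m₂ + 1) / 2) /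
          (Gamma ((m₁ + 2) / 4 - I * l / 2) * Gamma ((rho m₁ m₂ - I * l) / 2))) := by
  set a := (rho m₁ m₂ - I * l) / 2
  set u := (-rho m₁ m₂ - I * l) / 2 with hu_def
  have ha : 0 < a.re := re_rho_sub_I_mul_div_two_pos hl
  have hu : 0 < u.re := re_neg_rho_sub_I_mul_div_two_pos hl
  have hc : 1 - I * l = a + u + 1 := by ring
  have huv : u + (m₁ + m₂ + 1) / 2 = (m₁ + 2) / 4 - I * l / 2 := by
    rw [hu_def, ofReal_rho]; ring
  have hden : (rho m₁ m₂ : ℂ) ^ 2 + l ^ 2 = -(4 * a * u) := by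
    linear_combination l ^ 2 * I_sq
  have htwo_pow : (2 : ℂ) ^ (I * l + rho m₁ m₂ + 1) = 4 * 2 ^ (I * l + rho m₁ m₂ - 1) := by
    rw [cpow_add _ _ two_ne_zero, cpow_sub _ _ two_ne_zero, cpow_one]; ring
  have ha0 : a ≠ 0 := ne_zero_of_re_pos ha
  rw [setIntegral_congr_fun measurableSet_Ioi (eqOn_Phi_mul_Del m₁ m₂ l),
    integral_const_mul, ← integral_Ioo_eq_integral_comp_inv_cosh_sq, hc,
    integral_betaKernel_add_one (add_pos ha one_pos) hu
      (re_natCast_add_natCast_add_one_div_two_pos m₁ m₂),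
    Gamma_add_one _ ha0, huv, hden, htwo_pow]
  clear_value a u
  field_simp

theorem two_mul_I_mul_mul_cfun_neg (m₁ m₂ : ℕ) (hl : l ≠ 0) :
    2 * I * l * cfun m₁ m₂ (-l) =
      -2 ^ (I * l + rho m₁ m₂ + 1) * (Gamma (1 - I * l) * Gamma ((m₁ + m₂ + 1) / 2) /
        (Gamma ((m₁ + 2) / 4 - I * l / 2) * Gamma ((rho m₁ m₂ - I * l) / 2))) := by
  have hGamma : Gamma (1 - I * l) = -(I * l) * Gamma (-(I * l)) := by
    rw [← Gamma_add_one _ (by simpa using hl), neg_add_eq_sub]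
  rw [cfun, hGamma, mul_neg, neg_div, ← sub_eq_add_neg, ← sub_eq_add_neg, sub_neg_eq_add,
    cpow_add _ 1 two_ne_zero, cpow_one, add_comm (I * l)]
  ring

end Parameters

theorem stmt4 (m₁ m₂ : ℕ) (hm₁ : 1 ≤ m₁) (l : ℂ) (hl : rho m₁ m₂ < l.im) :
    IntegrableOn (fun t : ℝ => Phi m₁ m₂ l t * (Del m₁ m₂ t : ℂ)) (Set.Ioi 0) ∧
    (∫ t in Set.Ioi (0 : ℝ), Phi m₁ m₂ l t * (Del m₁ m₂ t : ℂ)) =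
      2 * Complex.I * l * cfun m₁ m₂ (-l) / ((rho m₁ m₂ : ℂ) ^ 2 + l ^ 2) ∧
    (∫ t in Set.Ioi (0 : ℝ), Phi m₁ m₂ l t * (Del m₁ m₂ t : ℂ)) =
      -((2 : ℂ) ^ (Complex.I * l + (rho m₁ m₂ : ℂ) + 1) / ((rho m₁ m₂ : ℂ) ^ 2 + l ^ 2)) *
        (Complex.Gamma (1 - Complex.I * l) * Complex.Gamma (((m₁ : ℂ) + (m₂ : ℂ) + 1) / 2) /
          (Complex.Gamma (((m₁ : ℂ) + 2) / 4 - Complex.I * l / 2) *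
            Complex.Gamma (((rho m₁ m₂ : ℂ) - Complex.I * l) / 2))) := by
  refine ⟨integrableOn_Phi_mul_Del hl, ?_, integral_Phi_mul_Del hl⟩
  rw [integral_Phi_mul_Del hl, two_mul_I_mul_mul_cfun_neg m₁ m₂ (ne_zero_of_rho_lt_im hl)]
  ring

end
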